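/- Let G be a hyperbolic group and let H be a quasiconvex subgroup of G. Then the collection of subgroups ℰ_G(H) = { H ∩ H^g : g ∈ G and H ∩ H^g is infinite } contains only finitely many subgroups of H up to conjugation by elements of H; that is, there is a finite set of subgroups E₁, …, E_r of H such that every infinite intersection H ∩ H^g (g ∈ G) equals h⁻¹E_ih for some h ∈ H and some 1 ≤ i ≤ r. -/

import Mathlib

/-!
The point is that only finitely many double cosets `HgH` have `H ∩ H^g` infinite.  Since
`H ∩ H^(b g₀ a) = (H ∩ H^g₀)^a` for `a, b ∈ H`, finitely many double cosets yield finitely many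
intersections up to conjugation in `H`.

If `H ∩ H^g` is infinite it contains some `x` much longer than `g`.  Put `y = g x g⁻¹ ∈ H` and look
at the geodesic quadrilateral `1, x, x g⁻¹ = g⁻¹ y, g⁻¹`, two of whose sides have length `|g|`.  A
point `m` deep inside `[1, x]` is far from those two short sides, so hyperbolicity puts it within `6δ`
of the side `[g⁻¹, g⁻¹ y]` (`exists_close_of_quadrilateral`).  By quasiconvexity `m` is `k`-close to
some `a ∈ H`, and the nearby point of the opposite side, on a translate by `g⁻¹` of a geodesic
`[1, y]`, is `k`-close to `g⁻¹ b` for some `b ∈ H`.  Hence `b⁻¹ g a ∈ HgH` has length at most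
`2k + 6δ` (`exists_short_doubleCoset_rep`), and balls in the word metric are finite
(`finite_ball`).
-/

open Set Pointwise

namespace HypPaper

variable {G : Type*} [Group G]

/-- The distance between `g` and `h` in the Cayley graph of `G` with respect to the
(symmetrized) generating set `T`, i.e. the word metric: the least length of a word in
`T ∪ T⁻¹` carrying `g` to `h`. -/
noncomputable def wdist (T : Set G) (g h : G) : ℕ :=
  sInf {n : ℕ | ∃ l : List G, l.length = n ∧ (∀ x ∈ l, x ∈ T ∨ x⁻¹ ∈ T) ∧ g * l.prod = h}

/-- The Gromov product `(x|y)_w` with respect to a distance function `d`. -/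
noncomputable def gp (d : G → G → ℕ) (w x y : G) : ℝ :=
  ((d w x : ℝ) + (d w y : ℝ) - (d x y : ℝ)) / 2

/-- Gromov hyperbolicity of the metric `d` (Gromov's four point condition, which for the
word metric of a Cayley graph is equivalent to the `δ`-slimness of all geodesic triangles). -/
def IsHypDist (d : G → G → ℕ) : Prop :=
  ∃ δ : ℝ, 0 ≤ δ ∧ ∀ w x y z : G,
    min (gp d w x z) (gp d w y z) - δ ≤ gp d w x y

/-- A group is hyperbolic if its Cayley graph with respect to some (equivalently, any)
finite generating set is Gromov hyperbolic. -/
def IsHyperbolicGroup (G : Type*) [Group G] : Prop :=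
  ∃ S : Finset G, Subgroup.closure (S : Set G) = ⊤ ∧ IsHypDist (wdist (S : Set G))

/-- A group is virtually cyclic if it has a cyclic subgroup of finite index.
A hyperbolic group is nonelementary iff it is not virtually cyclic. -/
def VirtuallyCyclic (G : Type*) [Group G] : Prop :=
  ∃ C : Subgroup G, C.index ≠ 0 ∧ IsCyclic C

/-- `p 0, p 1, ..., p n` is the vertex sequence of a geodesic (w.r.t. `d`). -/
def IsGeodesicSeq (d : G → G → ℕ) (n : ℕ) (p : ℕ → G) : Prop :=
  ∀ i j : ℕ, i ≤ j → j ≤ n → d (p i) (p j) = j - i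

/-- A subset `A` is quasiconvex w.r.t. the metric `d`: there is `k ≥ 0` such that every
geodesic joining two points of `A` lies in the `k`-neighborhood of `A`. -/
def IsQuasiconvex (d : G → G → ℕ) (A : Set G) : Prop :=
  ∃ k : ℕ, ∀ (n : ℕ) (p : ℕ → G), IsGeodesicSeq d n p → p 0 ∈ A → p n ∈ A →
    ∀ i ≤ n, ∃ a ∈ A, d (p i) a ≤ k

/-- A subgroup `H` of `G` is weakly malnormal if it is infinite and `H ∩ gHg⁻¹` is finite
for every `g ∈ G \ H`. -/
def WeaklyMalnormal (H : Subgroup G) : Prop :=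
  (H : Set G).Infinite ∧ ∀ g : G, g ∉ H →
    ((H ⊓ ConjAct.toConjAct g • H : Subgroup G) : Set G).Finite

/-- A sequence in `G` converging at infinity: Gromov products `(aᵢ|aⱼ)₁ → ∞`. -/
def ConvAtInf (d : G → G → ℕ) (a : ℕ → G) : Prop :=
  ∀ M : ℝ, ∃ N : ℕ, ∀ i ≥ N, ∀ j ≥ N, M ≤ gp d 1 (a i) (a j)

/-- Two sequences converge to the same point at infinity: `(aᵢ|bⱼ)₁ → ∞`. -/
def SeqEquiv (d : G → G → ℕ) (a b : ℕ → G) : Prop :=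
  ∀ M : ℝ, ∃ N : ℕ, ∀ i ≥ N, ∀ j ≥ N, M ≤ gp d 1 (a i) (b j)

/-- Sequences converging at infinity. -/
def BSeq (G : Type*) [Group G] (d : G → G → ℕ) := {a : ℕ → G // ConvAtInf d a}

/-- The (sequential) Gromov boundary `∂G` of `G` w.r.t. the word metric `d`:
equivalence classes of sequences converging at infinity. -/
def Boundary (G : Type*) [Group G] (d : G → G → ℕ) :=
  Quot (fun a b : BSeq G d => SeqEquiv d a.1 b.1)

/-- The boundary point determined by a sequence converging at infinity. -/
def toBoundary (d : G → G → ℕ) (b : BSeq G d) : Boundary G d :=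
  Quot.mk _ b

/-- A basic neighborhood in the boundary: points which can be represented by a sequence
whose Gromov products with (a representative of) the given point eventually exceed `M`. -/
def basicNbhd (d : G → G → ℕ) (a : BSeq G d) (M : ℝ) : Set (Boundary G d) :=
  {ξ | ∃ b : BSeq G d, toBoundary d b = ξ ∧
        ∃ N : ℕ, ∀ i ≥ N, ∀ j ≥ N, M ≤ gp d 1 (a.1 i) (b.1 j)}

/-- The standard topology on the Gromov boundary. -/
instance (d : G → G → ℕ) : TopologicalSpace (Boundary G d) :=
  TopologicalSpace.generateFrom {U | ∃ a M, U = basicNbhd d a M}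

/-- The limit set `Λ(A) ⊆ ∂G` of a subset `A ⊆ G`: boundary points which are limits of
sequences of points of `A`. -/
def limitSet (d : G → G → ℕ) (A : Set G) : Set (Boundary G d) :=
  {ξ | ∃ b : BSeq G d, (∀ n, b.1 n ∈ A) ∧ toBoundary d b = ξ}

/-! ### The word metric -/

lemma wdist_le_length {T : Set G} (g : G) (l : List G) (hl : ∀ x ∈ l, x ∈ T ∨ x⁻¹ ∈ T) :
    wdist T g (g * l.prod) ≤ l.length :=
  Nat.sInf_le ⟨l, rfl, hl, rfl⟩

lemma exists_word {T : Set G} (hT : Subgroup.closure T = ⊤) (g h : G) :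
    ∃ l : List G, l.length = wdist T g h ∧ (∀ x ∈ l, x ∈ T ∨ x⁻¹ ∈ T) ∧ g * l.prod = h := by
  have hne : {n : ℕ | ∃ l : List G, l.length = n ∧ (∀ x ∈ l, x ∈ T ∨ x⁻¹ ∈ T) ∧
      g * l.prod = h}.Nonempty := by
    have hmem : g⁻¹ * h ∈ Submonoid.closure (T ∪ T⁻¹) := by
      rw [← Subgroup.closure_toSubmonoid, hT]
      trivial
    obtain ⟨l, hl, hp⟩ := Submonoid.exists_list_of_mem_closure hmem
    exact ⟨l.length, l, rfl, hl, by rw [hp]; group⟩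
  exact Nat.sInf_mem hne

lemma wdist_mul_left (T : Set G) (a g h : G) : wdist T (a * g) (a * h) = wdist T g h := by
  simp only [wdist, mul_assoc, mul_right_inj]

lemma wdist_triangle {T : Set G} (hT : Subgroup.closure T = ⊤) (x y z : G) :
    wdist T x z ≤ wdist T x y + wdist T y z := by
  obtain ⟨l, hl, hlT, rfl⟩ := exists_word hT x y
  obtain ⟨l', hl', hlT', rfl⟩ := exists_word hT (x * l.prod) z
  rw [← hl, ← hl', ← List.length_append, mul_assoc, ← List.prod_append]
  refine wdist_le_length x _ fun t ht => ?_
  rcases List.mem_append.1 ht with h | h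
  exacts [hlT t h, hlT' t h]

lemma wdist_comm_le {T : Set G} (hT : Subgroup.closure T = ⊤) (x y : G) :
    wdist T y x ≤ wdist T x y := by
  obtain ⟨l, hl, hlT, hp⟩ := exists_word hT x y
  have h := wdist_le_length (T := T) y (l.map (·⁻¹)).reverse (by
    intro t ht
    simp only [List.mem_reverse, List.mem_map] at ht
    obtain ⟨u, hu, rfl⟩ := ht
    rw [inv_inv]
    exact (hlT u hu).symm)
  rw [← List.prod_inv_reverse, ← hp, mul_inv_cancel_right] at h
  simpa [hl, hp] using h

lemma wdist_comm {T : Set G} (hT : Subgroup.closure T = ⊤) (x y : G) :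
    wdist T x y = wdist T y x :=
  le_antisymm (wdist_comm_le hT y x) (wdist_comm_le hT x y)

lemma exists_geodesicSeq {T : Set G} (hT : Subgroup.closure T = ⊤) (x y : G) :
    ∃ p : ℕ → G, IsGeodesicSeq (wdist T) (wdist T x y) p ∧ p 0 = x ∧ p (wdist T x y) = y := by
  obtain ⟨l, hl, hlT, hp⟩ := exists_word hT x y
  have hle : ∀ i j, i ≤ j →
      wdist T (x * (l.take i).prod) (x * (l.take j).prod) ≤ j - i := by
    intro i j hij
    have h := wdist_le_length (T := T) (x * (l.take i).prod) ((l.drop i).take (j - i))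
      fun t ht => hlT t (List.mem_of_mem_drop (List.mem_of_mem_take ht))
    have e : (l.take j) = l.take i ++ (l.drop i).take (j - i) := by
      rw [← List.take_add, Nat.add_sub_cancel' hij]
    rw [e, List.prod_append, ← mul_assoc]
    exact h.trans (List.length_take_le _ _)
  have hend : x * (l.take (wdist T x y)).prod = y := by
    rw [← hl, List.take_length, hp]
  refine ⟨fun i => x * (l.take i).prod, ?_, by simp, hend⟩
  intro i j hij hj
  refine le_antisymm (hle i j hij) ?_
  have h1 := hle 0 i (Nat.zero_le _)
  have h2 := hle j _ hj
  rw [hend] at h2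
  simp only [List.take_zero, List.prod_nil, mul_one] at h1
  have h3 := wdist_triangle hT x (x * (l.take i).prod) y
  have h4 := wdist_triangle hT (x * (l.take i).prod) (x * (l.take j).prod) y
  show j - i ≤ wdist T (x * (l.take i).prod) (x * (l.take j).prod)
  omega

lemma finite_ball (S : Finset G) (hS : Subgroup.closure (S : Set G) = ⊤) (R : ℕ) :
    {g : G | wdist (S : Set G) 1 g ≤ R}.Finite := by
  have hfin : (((S : Set G) ∪ (S : Set G)⁻¹)).Finite := S.finite_toSet.union S.finite_toSet.inv
  have := hfin.to_subtype
  refine ((List.finite_length_le ↥((S : Set G) ∪ (S : Set G)⁻¹) R).image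
    fun l => (l.map Subtype.val).prod).subset ?_
  intro g hg
  obtain ⟨l, hl, hlT, hp⟩ := exists_word hS 1 g
  lift l to List ↥((S : Set G) ∪ (S : Set G)⁻¹) using hlT
  refine ⟨l, ?_, by simpa using hp⟩
  rw [List.length_map] at hl
  exact hl.trans_le hg

/-! ### Thin quadrilaterals and short double coset representatives -/

/-- A point `m` on a geodesic `[a, b]` which is far from `a` and `b`, compared with `d(a, c)` and
`d(b, e)`, lies within `6δ` of every geodesic `q` from `c` to `e`. -/
lemma exists_close_of_quadrilateral {T : Set G} (hT : Subgroup.closure T = ⊤) {δ : ℝ}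
    (hδ : 0 ≤ δ) (hyp : ∀ w x y z : G,
      min (gp (wdist T) w x z) (gp (wdist T) w y z) - δ ≤ gp (wdist T) w x y)
    {a b c e m : G} (hm : wdist T a m + wdist T m b = wdist T a b)
    (ha : (wdist T a c : ℝ) + 2 * δ < wdist T a m)
    (hb : (wdist T b e : ℝ) + 2 * δ < wdist T m b)
    {q : ℕ → G} (hq : IsGeodesicSeq (wdist T) (wdist T c e) q)
    (hq0 : q 0 = c) (hqn : q (wdist T c e) = e) :
    ∃ j ≤ wdist T c e, (wdist T m (q j) : ℝ) ≤ 6 * δ := by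
  have tri : ∀ x y z : G, (wdist T x z : ℝ) ≤ wdist T x y + wdist T y z := fun x y z => by
    exact_mod_cast wdist_triangle hT x y z
  have sym : ∀ x y : G, (wdist T x y : ℝ) = wdist T y x := fun x y => by rw [wdist_comm hT]
  have hm' : (wdist T a m : ℝ) + wdist T m b = wdist T a b := by exact_mod_cast hm
  -- The products `(a|c)_m` and `(e|b)_m` exceed `2δ` while `(a|b)_m = 0`, so `(c|e)_m ≤ 2δ`.
  have hce : gp (wdist T) m c e ≤ 2 * δ := by
    by_contra! hcon
    have h1 : 2 * δ < gp (wdist T) m a c := by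
      have := tri m c a
      have := sym m a
      have := sym c a
      unfold gp
      linarith
    have h2 : 2 * δ < gp (wdist T) m b e := by
      have := tri m e b
      have := sym e b
      unfold gp
      linarith
    have h0 : gp (wdist T) m a b = 0 := by
      have := sym m a
      unfold gp
      linarith
    have hc' : gp (wdist T) m e c = gp (wdist T) m c e := by
      have := sym c e
      unfold gp
      linarith
    have hbc := hyp m b c e
    have hab := hyp m a b c
    have h3 : δ < gp (wdist T) m b c := by
      have := lt_min h2 hcon
      linarith
    have h4 : δ < min (gp (wdist T) m a c) (gp (wdist T) m b c) := lt_min (by linarith) h3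
    linarith
  unfold gp at hce
  rcases le_total (wdist T c m) (wdist T c e) with hle | hle
  -- The point of `q` at the same distance from `c` as `m`.
  · refine ⟨wdist T c m, hle, ?_⟩
    set u := q (wdist T c m) with hu
    have hcu : (wdist T c u : ℝ) = wdist T c m := by
      have := hq 0 (wdist T c m) (Nat.zero_le _) hle
      rw [hq0, Nat.sub_zero] at this
      exact_mod_cast this
    have hue : (wdist T u e : ℝ) = wdist T c e - wdist T c m := by
      have := hq (wdist T c m) (wdist T c e) hle le_rfl
      rw [hqn] at this
      rw [hu, this, Nat.cast_sub hle]
    have h := hyp u c e m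
    have s1 := sym u c
    have s2 := sym u m
    have s3 := sym m c
    have s4 := sym m e
    have h0 : gp (wdist T) u c e = 0 := by
      unfold gp
      linarith
    rcases min_cases (gp (wdist T) u c m) (gp (wdist T) u e m) with ⟨h5, -⟩ | ⟨h5, -⟩ <;>
    · rw [h5, h0] at h
      unfold gp at h
      linarith
  · refine ⟨wdist T c e, le_rfl, ?_⟩
    rw [hqn]
    have : (wdist T c e : ℝ) ≤ wdist T c m := by exact_mod_cast hle
    have := sym c m
    linarith

/-- Double cosets `HgH` with `H ∩ H^g` infinite have uniformly short representatives. -/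
lemma exists_short_doubleCoset_rep (S : Finset G) (hgen : Subgroup.closure (S : Set G) = ⊤)
    (hhyp : IsHypDist (wdist (S : Set G))) (H : Subgroup G)
    (hHqc : IsQuasiconvex (wdist (S : Set G)) (H : Set G)) :
    ∃ R : ℕ, ∀ g : G,
      ((H ⊓ ConjAct.toConjAct g⁻¹ • H : Subgroup G) : Set G).Infinite →
      ∃ a ∈ H, ∃ b ∈ H, wdist (S : Set G) 1 (b⁻¹ * g * a) ≤ R := by
  obtain ⟨δ, hδ, hyp⟩ := hhyp
  obtain ⟨k, hk⟩ := hHqc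
  set d := wdist (S : Set G) with hd
  refine ⟨2 * k + ⌈6 * δ⌉₊, fun g hinf => ?_⟩
  -- `x` is long enough that the vertex at distance `d 1 g⁻¹ + ⌈2δ⌉ + 1` from `1` along `[1, x]`
  -- is at least as far from `x`.
  obtain ⟨x, hxK, hx⟩ := (hinf.sdiff (finite_ball S hgen (2 * (d 1 g⁻¹ + ⌈2 * δ⌉₊ + 1)))).nonempty
  simp only [mem_ofPred_eq, not_le] at hx
  obtain ⟨hxH, hxg⟩ := hxK
  have hyH : g * x * g⁻¹ ∈ H := by
    have := Subgroup.mem_pointwise_smul_iff_inv_smul_mem.1 hxg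
    simpa [ConjAct.smul_def] using this
  obtain ⟨p, hp, hp0, hpn⟩ := exists_geodesicSeq hgen 1 x
  obtain ⟨q, hq, hq0, hqn⟩ := exists_geodesicSeq hgen 1 (g * x * g⁻¹)
  rw [← hd] at hp hpn hq hqn hx
  have hce : d g⁻¹ (x * g⁻¹) = d 1 (g * x * g⁻¹) := by
    rw [hd, ← wdist_mul_left _ g]
    simp [mul_assoc]
  have hbe : d x (x * g⁻¹) = d 1 g⁻¹ := by
    rw [hd, ← wdist_mul_left _ x 1, mul_one]
  set i := d 1 g⁻¹ + ⌈2 * δ⌉₊ + 1 with hi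
  have hin : i ≤ d 1 x := by omega
  have h1 : d 1 (p i) = i := by
    have := hp 0 i (Nat.zero_le _) hin
    rwa [hp0, Nat.sub_zero] at this
  have h2 : d (p i) x = d 1 x - i := by
    have := hp i _ hin le_rfl
    rwa [hpn] at this
  have hir : (d 1 g⁻¹ : ℝ) + 2 * δ < i := by
    have := Nat.le_ceil (2 * δ)
    rw [hi]
    push_cast
    linarith
  obtain ⟨j, hj, hclose⟩ := exists_close_of_quadrilateral hgen hδ hyp
    (a := 1) (b := x) (c := g⁻¹) (e := x * g⁻¹) (m := p i) (q := fun j => g⁻¹ * q j)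
    (by rw [← hd]; omega)
    (by rw [← hd, h1]; exact hir)
    (by
      rw [← hd, hbe]
      have : i ≤ d (p i) x := by omega
      exact hir.trans_le (by exact_mod_cast this))
    (by
      rw [← hd, hce]
      intro s t hst ht
      simp only [hd, wdist_mul_left]
      exact hq s t hst ht)
    (by simp [hq0])
    (by rw [← hd, hce, hqn]; group)
  rw [← hd, hce] at hj
  obtain ⟨a, ha, hak⟩ := hk _ p hp (by rw [hp0]; exact H.one_mem) (by rw [hpn]; exact hxH) i hin
  obtain ⟨b, hb, hbk⟩ := hk _ q hq (by rw [hq0]; exact H.one_mem) (by rw [hqn]; exact hyH) j hj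
  refine ⟨a, ha, b, hb, ?_⟩
  have hclose' : d (p i) (g⁻¹ * q j) ≤ ⌈6 * δ⌉₊ := by
    exact_mod_cast hclose.trans (Nat.le_ceil _)
  have e1 : d 1 (b⁻¹ * g * a) = d (g⁻¹ * b) a := by
    rw [hd, ← wdist_mul_left _ (g⁻¹ * b) 1]
    congr 1 <;> group
  have e2 : d (g⁻¹ * q j) (g⁻¹ * b) = d (q j) b := by rw [hd, wdist_mul_left]
  have t1 : d (g⁻¹ * b) a ≤ d (g⁻¹ * b) (p i) + d (p i) a := wdist_triangle hgen _ _ _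
  have t2 : d (p i) (g⁻¹ * b) ≤ d (p i) (g⁻¹ * q j) + d (g⁻¹ * q j) (g⁻¹ * b) :=
    wdist_triangle hgen _ _ _
  have c1 : d (g⁻¹ * b) (p i) = d (p i) (g⁻¹ * b) := wdist_comm hgen _ _
  omega

lemma toConjAct_smul_eq_self {H : Subgroup G} {a : G} (ha : a ∈ H) :
    ConjAct.toConjAct a • H = H :=
  Subgroup.conj_smul_eq_self_of_mem ha

/-- Let `G` be a hyperbolic group and `H` a quasiconvex subgroup.  Then the collection
`ℰ_G(H) = { H ∩ H^g : g ∈ G, H ∩ H^g infinite }` (where `H^g = g⁻¹Hg`) contains only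
finitely many subgroups of `H` up to conjugation by elements of `H`: there are subgroups
`E₁, …, E_r ≤ H` such that every infinite `H ∩ H^g` equals `h⁻¹ Eᵢ h` for some `h ∈ H`
and some `i`. -/
theorem finitely_many_infinite_intersections_up_to_conjugacy
    {G : Type*} [Group G] (S : Finset G)
    (hgen : Subgroup.closure (S : Set G) = ⊤)
    (hhyp : IsHypDist (wdist (S : Set G)))
    (H : Subgroup G)
    (hHqc : IsQuasiconvex (wdist (S : Set G)) (H : Set G)) :
    ∃ (r : ℕ) (E : Fin r → Subgroup G), (∀ i, E i ≤ H) ∧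
      ∀ g : G,
        ((H ⊓ ConjAct.toConjAct g⁻¹ • H : Subgroup G) : Set G).Infinite →
        ∃ h ∈ H, ∃ i : Fin r,
          H ⊓ ConjAct.toConjAct g⁻¹ • H = ConjAct.toConjAct h⁻¹ • (E i) := by
  obtain ⟨R, hR⟩ := exists_short_doubleCoset_rep S hgen hhyp H hHqc
  have hfin := finite_ball S hgen R
  have := hfin.to_subtype
  obtain ⟨r, ⟨f⟩⟩ := Finite.exists_equiv_fin {g : G | wdist (S : Set G) 1 g ≤ R}
  refine ⟨r, fun i => H ⊓ ConjAct.toConjAct ((f.symm i : G))⁻¹ • H, fun i => inf_le_left, ?_⟩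
  intro g hg
  obtain ⟨a, ha, b, hb, hab⟩ := hR g hg
  refine ⟨a⁻¹, H.inv_mem ha, f ⟨_, hab⟩, ?_⟩
  simp only [Equiv.symm_apply_apply]
  rw [inv_inv, Subgroup.smul_inf, toConjAct_smul_eq_self ha, smul_smul,
    ← map_mul]
  have e : a * (b⁻¹ * g * a)⁻¹ = g⁻¹ * b := by group
  rw [e, map_mul, mul_smul, toConjAct_smul_eq_self hb]

end HypPaper
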